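/- arXiv:math/9810131 — 2 statements merged into one kernel-verified Lean document; each statement's English description precedes it below -/
import Mathlib

section
/- Let ψ : D → D be analytic with sup_{z ∈ D} |ψ(z)| < 1. Then the composition operator C_ψ : H^∞(D) → H^∞(D), defined by C_ψ(f)(z) = f(ψ(z)), is a well-defined compact bounded linear operator on H^∞(D). -/
/-!
By the Schwarz lemma, a family of holomorphic functions bounded by a common constant on an open set
is equicontinuous there, so by Arzelà–Ascoli its restrictions to a compact subset `K` form a
relatively compact set. If `ψ` takes its values in `K`, then `f ∘ ψ` depends only on the restriction
of `f` to `K`, continuously in the sup norm; and `f ∘ ψ` stays in the space of bounded holomorphic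
functions, which is closed because uniform limits of holomorphic functions are holomorphic.
-/

set_option synthInstance.maxHeartbeats 1000000

/-- `H^∞(D)`: bounded analytic functions on the open unit disc, realized as the
subalgebra of those bounded continuous functions on the disc which agree with a
function analytic on the disc.  The norm is the sup norm `‖f‖ = sup_{z ∈ D} |f z|`. -/
noncomputable def Hinf : Subalgebra ℂ (BoundedContinuousFunction (Metric.ball (0 : ℂ) 1) ℂ) where
  carrier := {f | ∃ g : ℂ → ℂ, DifferentiableOn ℂ g (Metric.ball 0 1) ∧
    ∀ z : Metric.ball (0 : ℂ) 1, f z = g z}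
  mul_mem' := by
    rintro f₁ f₂ ⟨g₁, hg₁, he₁⟩ ⟨g₂, hg₂, he₂⟩
    exact ⟨g₁ * g₂, hg₁.mul hg₂, fun z => by simp [he₁ z, he₂ z]⟩
  add_mem' := by
    rintro f₁ f₂ ⟨g₁, hg₁, he₁⟩ ⟨g₂, hg₂, he₂⟩
    exact ⟨g₁ + g₂, hg₁.add hg₂, fun z => by simp [he₁ z, he₂ z]⟩
  algebraMap_mem' := by
    intro c
    exact ⟨fun _ => c, differentiableOn_const c, fun z => by simp⟩

open Metric Set Filter Topology
open scoped BoundedContinuousFunction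

section ArzelaAscoli

variable {X Y β : Type*} [TopologicalSpace X] [TopologicalSpace Y] [MetricSpace β]

theorem isCompact_closure_image_compContinuous {A : Set (Y →ᵇ β)} {s : Set β} {K : Set Y}
    (hA : EquicontinuousOn ((↑) : A → Y → β) K) (hs : IsCompact s)
    (hAs : ∀ f ∈ A, ∀ y ∈ K, f y ∈ s) (hK : IsCompact K) (φ : C(X, Y)) (hφ : ∀ x, φ x ∈ K) :
    IsCompact (closure ((fun f ↦ f.compContinuous φ) '' A)) := by
  have : CompactSpace K := isCompact_iff_compactSpace.mp hK
  let φK : C(X, K) := ⟨fun x ↦ ⟨φ x, hφ x⟩, φ.continuous.subtype_mk hφ⟩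
  let restrictions : Set (K →ᵇ β) := (fun f : Y →ᵇ β ↦ f.domRestrict K) '' A
  have restrictions_compact : IsCompact (closure restrictions) := by
    refine BoundedContinuousFunction.arzela_ascoli s hs _ ?_ ?_
    · rintro _ x ⟨f, hf, rfl⟩
      exact hAs f hf x x.2
    · intro x W hW
      filter_upwards [(equicontinuous_restrict_iff _).mpr hA x W hW] with y hy
      rintro ⟨_, f, hf, rfl⟩
      exact hy ⟨f, hf⟩
  refine (restrictions_compact.image
    (BoundedContinuousFunction.continuous_compContinuous φK)).closure_of_subset ?_
  rintro _ ⟨f, hf, rfl⟩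
  exact ⟨f.domRestrict K, subset_closure ⟨f, hf, rfl⟩, rfl⟩

end ArzelaAscoli

section BoundedHolomorphic

variable {E F : Type*} [NormedAddCommGroup E] [NormedSpace ℂ E]
  [NormedAddCommGroup F] [NormedSpace ℂ F]

theorem equicontinuousOn_of_differentiableOn_of_norm_le {ι : Type*} {G : ι → E → F} {U : Set E}
    {M : ℝ} (hU : IsOpen U) (hG : ∀ i, DifferentiableOn ℂ (G i) U)
    (hM : ∀ i, ∀ z ∈ U, ‖G i z‖ ≤ M) : EquicontinuousOn G U := by
  intro c hc
  obtain ⟨R, hR, hball⟩ := isOpen_iff.mp hU c hc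
  refine EquicontinuousAt.equicontinuousWithinAt ?_ U
  refine equicontinuousAt_of_continuity_modulus (fun z ↦ (M + M) / R * dist z c) ?_ G ?_
  · have : Continuous fun z ↦ (M + M) / R * dist z c := by fun_prop
    simpa only [dist_self, mul_zero] using this.tendsto c
  · filter_upwards [ball_mem_nhds c hR] with z hz i
    have hmaps : MapsTo (G i) (ball c R) (closedBall (G i c) (M + M)) := fun w hw ↦
      (dist_le_norm_add_norm _ _).trans (add_le_add (hM i w (hball hw)) (hM i c hc))
    rw [dist_comm]
    exact Complex.dist_le_div_mul_dist_of_mapsTo_ball ((hG i).mono hball) hmaps hz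

variable (F) in
/-- The space `H^∞(U, F)` of bounded holomorphic functions on a set `U` with values in `F`, carrying
the sup norm. As in `Hinf`, holomorphy is encoded by the existence of an extension to the whole
space that is differentiable on `U`. -/
def boundedHolomorphic (U : Set E) : Submodule ℂ (U →ᵇ F) where
  carrier := {f | ∃ g : E → F, DifferentiableOn ℂ g U ∧ ∀ z : U, f z = g z}
  add_mem' := by
    rintro _ _ ⟨g₁, hg₁, hfg₁⟩ ⟨g₂, hg₂, hfg₂⟩
    exact ⟨g₁ + g₂, hg₁.add hg₂, fun z ↦ congrArg₂ (· + ·) (hfg₁ z) (hfg₂ z)⟩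
  zero_mem' := ⟨0, differentiableOn_const 0, fun _ ↦ rfl⟩
  smul_mem' := by
    rintro c _ ⟨g, hg, hfg⟩
    exact ⟨c • g, hg.const_smul c, fun z ↦ congrArg (c • ·) (hfg z)⟩

namespace boundedHolomorphic

theorem isClosed [CompleteSpace F] {U : Set ℂ} (hU : IsOpen U) :
    IsClosed (boundedHolomorphic F U : Set (U →ᵇ F)) := by
  refine isClosed_of_closure_subset fun f hf ↦ ?_
  obtain ⟨u, hu, hlim⟩ := mem_closure_iff_seq_limit.mp hf
  choose g hg hug using hu
  let f' : ℂ → F := Function.extend (↑) f 0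
  have hf' (z : U) : f z = f' z := (Subtype.val_injective.extend_apply f 0 z).symm
  have hunif : TendstoUniformlyOn g f' atTop U := by
    rw [tendstoUniformlyOn_iff_restrict]
    convert BoundedContinuousFunction.tendsto_iff_tendstoUniformly.mp hlim using 2 with n
    · exact funext fun z ↦ (hug n z).symm
    · exact funext fun z ↦ (hf' z).symm
  exact ⟨f', hunif.tendstoLocallyUniformlyOn.differentiableOn (.of_forall hg) hU, hf'⟩

theorem equicontinuous_of_norm_le {U : Set E} (hU : IsOpen U) {A : Set (U →ᵇ F)}
    (hA : A ⊆ boundedHolomorphic F U) {M : ℝ} (hM : ∀ f ∈ A, ‖f‖ ≤ M) :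
    Equicontinuous ((↑) : A → U → F) := by
  choose g hg hfg using fun f : A ↦ hA f.2
  have hgM (f : A) (z : E) (hz : z ∈ U) : ‖g f z‖ ≤ M := by
    rw [← hfg f ⟨z, hz⟩]
    exact (f.1.norm_coe_le_norm _).trans (hM f f.2)
  have hgU := equicontinuousOn_of_differentiableOn_of_norm_le hU hg hgM
  convert (equicontinuous_restrict_iff g).mpr hgU using 1
  exact funext₂ hfg

/-- The composition operator `C_ψ : H^∞(V, F) → H^∞(U, F)`, `f ↦ f ∘ ψ`, of a holomorphic map
`ψ : U → V`. -/
noncomputable def compCLM {E' : Type*} [NormedAddCommGroup E'] [NormedSpace ℂ E'] {U : Set E'}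
    {V : Set E} {ψ : E' → E} (hψ : DifferentiableOn ℂ ψ U) (hmaps : MapsTo ψ U V) :
    boundedHolomorphic F V →L[ℂ] boundedHolomorphic F U :=
  ((BoundedContinuousFunction.compContinuousCLM F ℂ
      ⟨hmaps.restrict ψ U V, hψ.continuousOn.mapsToRestrict hmaps⟩).comp
    (boundedHolomorphic F V).subtypeL).codRestrict _ <| by
      rintro ⟨f, g, hg, hfg⟩
      exact ⟨g ∘ ψ, hg.comp hψ hmaps, fun z ↦ hfg ⟨ψ z, hmaps z.2⟩⟩

theorem isCompactOperator_compCLM [ProperSpace F] {U : Set ℂ} {V K : Set E} {ψ : ℂ → E}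
    (hU : IsOpen U) (hV : IsOpen V) (hψ : DifferentiableOn ℂ ψ U) (hK : IsCompact K) (hKV : K ⊆ V)
    (hψK : MapsTo ψ U K) :
    IsCompactOperator (compCLM (F := F) hψ (hψK.mono_right hKV)) := by
  refine IsCompactOperator.codRestrict ?_ _ (boundedHolomorphic.isClosed hU)
  refine (isCompactOperator_iff_isCompact_closure_image_closedBall _ one_pos).mpr ?_
  let unitBall : Set (V →ᵇ F) := (↑) '' closedBall (0 : boundedHolomorphic F V) 1
  have norm_le_one : ∀ f ∈ unitBall, ‖f‖ ≤ 1 := by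
    rintro _ ⟨f, hf, rfl⟩
    exact mem_closedBall_zero_iff.mp hf
  have unitBall_equicontinuous : Equicontinuous ((↑) : unitBall → V → F) :=
    equicontinuous_of_norm_le hV (image_subset_iff.mpr fun f _ ↦ f.2) norm_le_one
  have unitBall_mapsTo : ∀ f ∈ unitBall, ∀ z ∈ ((↑) ⁻¹' K : Set V), f z ∈ closedBall 0 1 :=
    fun f hf z _ ↦ mem_closedBall_zero_iff.mpr ((f.norm_coe_le_norm z).trans (norm_le_one f hf))
  have hK' : IsCompact ((↑) ⁻¹' K : Set V) :=
    IsInducing.subtypeVal.isCompact_preimage' hK (hKV.trans_eq Subtype.range_val.symm)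
  have compact_image := isCompact_closure_image_compContinuous
    (unitBall_equicontinuous.equicontinuousOn _) (isCompact_closedBall 0 1) unitBall_mapsTo hK'
    ⟨(hψK.mono_right hKV).restrict ψ U V, hψ.continuousOn.mapsToRestrict _⟩ fun z ↦ hψK z.2
  rwa [image_image] at compact_image

end boundedHolomorphic

theorem composition_operator_compact_general [ProperSpace F] {U : Set ℂ} {V K : Set E} {ψ : ℂ → E}
    (hU : IsOpen U) (hV : IsOpen V) (hψ : DifferentiableOn ℂ ψ U) (hK : IsCompact K) (hKV : K ⊆ V)
    (hψK : MapsTo ψ U K) :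
    ∃ T : boundedHolomorphic F V →L[ℂ] boundedHolomorphic F U,
      (∀ (f : boundedHolomorphic F V) (z : U),
        (T f : U →ᵇ F) z = (f : V →ᵇ F) ⟨ψ z, hKV (hψK z.2)⟩) ∧
      IsCompactOperator T :=
  ⟨boundedHolomorphic.compCLM hψ (hψK.mono_right hKV), fun _ _ ↦ rfl,
    boundedHolomorphic.isCompactOperator_compCLM hU hV hψ hK hKV hψK⟩

end BoundedHolomorphic

/-- If `ψ : D → D` is analytic with `sup_{z ∈ D} ‖ψ z‖ ≤ r < 1`, then the composition
operator `C_ψ f = f ∘ ψ` is a well-defined compact bounded linear operator on `H^∞(D)`. -/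
theorem composition_operator_compact
    (ψ : ℂ → ℂ) (hψ : DifferentiableOn ℂ ψ (Metric.ball 0 1))
    (hmaps : Set.MapsTo ψ (Metric.ball (0 : ℂ) 1) (Metric.ball (0 : ℂ) 1))
    (r : ℝ) (hr0 : 0 ≤ r) (hr1 : r < 1)
    (hbd : ∀ z ∈ Metric.ball (0 : ℂ) 1, ‖ψ z‖ ≤ r) :
    ∃ T : Hinf →L[ℂ] Hinf,
      (∀ (f : Hinf) (z : Metric.ball (0 : ℂ) 1),
        (T f : BoundedContinuousFunction (Metric.ball (0 : ℂ) 1) ℂ) z =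
          (f : BoundedContinuousFunction (Metric.ball (0 : ℂ) 1) ℂ) ⟨ψ z, hmaps z.2⟩) ∧
      IsCompactOperator T := by
  -- As a normed space, `Hinf` is definitionally equal to `boundedHolomorphic ℂ (ball 0 1)`.
  exact composition_operator_compact_general isOpen_ball isOpen_ball hψ
    (isCompact_closedBall 0 r) (closedBall_subset_ball hr1)
    fun z hz ↦ mem_closedBall_zero_iff.mpr (hbd z hz)
end

section
/- Define τ : D → ℂ by τ(z) = (1/2) z e^{(z+1)/(z−1)}. Then for every fixed z ∈ D, the limit as x → 1 from the left along real x ∈ (0,1) of τ((z + x)/(1 + x z)) is 0; that is, lim_{x → 1⁻} τ((z+x)/(1+xz)) = 0. -/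
/-!
Write `C w = (1 + w) / (1 - w)`, so that the exponent of `τ` is `-C w`. The map `C` carries the
unit disc to the right half-plane and turns the Möbius map `w ↦ (w + x) / (1 + x w)` into
multiplication by `C x`. As `x → 1⁻` the real number `C x` tends to `+∞` while `Re (C z) > 0` is
fixed, so the exponential factor tends to `0`; the linear factor tends to `1 / 2`.
-/

open Filter Topology

section Algebra

variable {K : Type*} [Field K]

/-- The Cayley transform, carrying the unit disc of `ℂ` to the right half-plane. It is defined over
any field so that it applies to both real and complex arguments; its value at the pole `1` is `0`,
by the convention for division. -/
def cayley (w : K) : K := (1 + w) / (1 - w)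

/-- The Möbius map `z ↦ (z + a) / (1 + a z)`. For real `a ∈ (-1, 1)` it is the automorphism of the
unit disc that fixes `±1` and sends `0` to `a`. -/
def mobius (a z : K) : K := (z + a) / (1 + a * z)

theorem cayley_mobius {a z : K} (h : 1 + a * z ≠ 0) :
    cayley (mobius a z) = cayley a * cayley z := by
  have h_num : 1 + mobius a z = (1 + a) * (1 + z) / (1 + a * z) := by
    rw [mobius, one_add_div h]
    ring
  have h_den : 1 - mobius a z = (1 - a) * (1 - z) / (1 + a * z) := by
    rw [mobius, one_sub_div h]
    ring
  rw [cayley, h_num, h_den, div_div_div_cancel_right₀ h, mul_div_mul_comm, cayley, cayley]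

theorem neg_cayley (w : K) : -cayley w = (w + 1) / (w - 1) := by
  rw [cayley, ← div_neg, neg_sub, add_comm]

end Algebra

theorem one_add_mul_ne_zero {R : Type*} [NormedRing R] [NormOneClass R] {a z : R}
    (ha : ‖a‖ ≤ 1) (hz : ‖z‖ < 1) : 1 + a * z ≠ 0 := by
  intro h
  have h_norm : ‖a * z‖ < 1 :=
    (norm_mul_le a z).trans_lt (mul_lt_one_of_nonneg_of_lt_one_right ha (norm_nonneg z) hz)
  rw [eq_neg_of_add_eq_zero_right h, norm_neg, norm_one] at h_norm
  exact h_norm.false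

theorem tendsto_mobius_nhds_one {K : Type*} [Field K] [TopologicalSpace K]
    [IsTopologicalDivisionRing K] {z : K} (hz : 1 + z ≠ 0) :
    Tendsto (fun a => mobius a z) (𝓝 1) (𝓝 1) := by
  have h_cont : ContinuousAt (fun a => mobius a z) 1 :=
    ContinuousAt.div₀ (by fun_prop) (by fun_prop) (by rwa [one_mul])
  have h_one : mobius 1 z = 1 := by rw [mobius, one_mul, add_comm, div_self hz]
  simpa only [h_one] using h_cont.tendsto

theorem tendsto_cayley_nhdsLT_one {K : Type*} [Field K] [LinearOrder K] [IsStrictOrderedRing K]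
    [TopologicalSpace K] [OrderTopology K] :
    Tendsto (fun x : K => cayley x) (𝓝[<] 1) atTop := by
  have h_num : Tendsto (fun x : K => 1 + x) (𝓝[<] 1) (𝓝 (1 + 1)) :=
    (tendsto_id.const_add 1).mono_left nhdsWithin_le_nhds
  have h_den : Tendsto (fun x : K => 1 - x) (𝓝[<] 1) (𝓝[>] 0) := by
    refine tendsto_nhdsWithin_iff.mpr ⟨?_, ?_⟩
    · simpa only [sub_self, id_eq] using
        ((tendsto_id (x := 𝓝 (1 : K))).const_sub 1).mono_left nhdsWithin_le_nhds
    · filter_upwards [self_mem_nhdsWithin] with x hx using sub_pos.mpr hx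
  simpa only [cayley, div_eq_mul_inv, Function.comp_apply] using
    h_num.pos_mul_atTop (by positivity) (tendsto_inv_nhdsGT_zero.comp h_den)

theorem re_cayley (z : ℂ) : (cayley z).re = (1 - ‖z‖ ^ 2) / ‖1 - z‖ ^ 2 := by
  rw [cayley, Complex.div_re, ← add_div, Complex.sq_norm, Complex.sq_norm, Complex.normSq_apply z]
  congr 1
  simp only [Complex.add_re, Complex.sub_re, Complex.add_im, Complex.sub_im, Complex.one_re,
    Complex.one_im]
  ring

theorem re_cayley_pos {z : ℂ} (hz : ‖z‖ < 1) : 0 < (cayley z).re := by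
  have h_ne : 1 - z ≠ 0 := by
    intro h
    rw [← sub_eq_zero.mp h, norm_one] at hz
    exact hz.false
  rw [re_cayley]
  exact div_pos (sub_pos.mpr (pow_lt_one₀ (norm_nonneg z) hz two_ne_zero)) (by positivity)

theorem tendsto_re_cayley_mobius {z : ℂ} (hz : ‖z‖ < 1) :
    Tendsto (fun x : ℝ => (cayley (mobius (x : ℂ) z)).re) (𝓝[<] 1) atTop := by
  refine (tendsto_cayley_nhdsLT_one.atTop_mul_const (re_cayley_pos hz)).congr' ?_
  filter_upwards [Ioo_mem_nhdsLT (zero_lt_one' ℝ)] with x hx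
  have h_norm : ‖(x : ℂ)‖ ≤ 1 := by
    rw [Complex.norm_real, Real.norm_of_nonneg hx.1.le]
    exact hx.2.le
  have h_cast : ((cayley x : ℝ) : ℂ) = cayley (x : ℂ) := by simp only [cayley]; push_cast; rfl
  rw [cayley_mobius (one_add_mul_ne_zero h_norm hz), ← h_cast, Complex.re_ofReal_mul]

/-- The function `τ(w) = (1/2) w e^{(w+1)/(w-1)}`, extended to all of `ℂ` with the junk value
`1 / 2` at `w = 1`. -/
noncomputable def tau (w : ℂ) : ℂ := (1 / 2 : ℂ) * w * Complex.exp ((w + 1) / (w - 1))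

theorem tendsto_tau_nhds_zero {α : Type*} {l : Filter α} {f : α → ℂ} {w : ℂ}
    (hf : Tendsto f l (𝓝 w)) (hre : Tendsto (fun x => (cayley (f x)).re) l atTop) :
    Tendsto (fun x => tau (f x)) l (𝓝 0) := by
  have h_exp : Tendsto (fun x => Complex.exp (-cayley (f x))) l (𝓝 0) :=
    Complex.tendsto_exp_nhds_zero_iff.mpr (tendsto_neg_atTop_atBot.comp hre)
  simpa only [tau, neg_cayley, mul_zero] using (hf.const_mul (1 / 2)).mul h_exp

/-- For `τ(z) = (1/2) z e^{(z+1)/(z-1)}` and fixed `z` in the open unit disc, the limit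
of `τ((z+x)/(1+xz))` as real `x ∈ (0,1)` tends to `1` from the left is `0`. -/
theorem tau_limit_along_mobius
    (z : ℂ) (hz : z ∈ Metric.ball (0 : ℂ) 1) :
    Filter.Tendsto
      (fun x : ℝ =>
        (1 / 2 : ℂ) * ((z + (x : ℂ)) / (1 + (x : ℂ) * z)) *
          Complex.exp
            (((z + (x : ℂ)) / (1 + (x : ℂ) * z) + 1) /
              ((z + (x : ℂ)) / (1 + (x : ℂ) * z) - 1)))
      (nhdsWithin 1 (Set.Ioo 0 1)) (nhds 0) := by
  change Tendsto (fun x : ℝ => tau (mobius (x : ℂ) z)) _ _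
  rw [nhdsWithin_Ioo_eq_nhdsLT zero_lt_one]
  have h_norm : ‖z‖ < 1 := mem_ball_zero_iff.mp hz
  have h_ne : 1 + z ≠ 0 := by
    simpa only [one_mul] using one_add_mul_ne_zero norm_one.le h_norm
  have h_cast : Tendsto ((↑) : ℝ → ℂ) (𝓝[<] 1) (𝓝 1) :=
    (Complex.continuous_ofReal.tendsto' 1 1 Complex.ofReal_one).mono_left nhdsWithin_le_nhds
  exact tendsto_tau_nhds_zero ((tendsto_mobius_nhds_one h_ne).comp h_cast)
    (tendsto_re_cayley_mobius h_norm)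
end
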